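/- Let (A, ≺_ω, ≻_ω, Ω) be a pre-anti-flexible family algebra. Define, for each ω ∈ Ω and x, y ∈ A, x ▷_ω y := x ≻_ω y − y ≺_ω x. Then (A, ▷_ω, Ω) is a left pre-Lie family algebra, i.e. (x ▷_α y) ▷_{αβ} z − x ▷_α (y ▷_β z) = (y ▷_β x) ▷_{βα} z − y ▷_β (x ▷_α z) for all x, y, z ∈ A and α, β ∈ Ω. -/

import Mathlib

/-!
Write `x ∗_{α,β} y := x ≻_α y + x ≺_β y`. Since `x ▷_α y - y ▷_β x = x ∗_{α,β} y - y ∗_{β,α} x`,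
the pre-Lie identity says that left multiplication by this commutator is the commutator of the
left multiplications `x ▷_α ·` and `y ▷_β ·`. By the second axiom, the former sends `z` to the
antisymmetrization of `x ≻_α (y ≻_β z) + (z ≺_β y) ≺_α x` in `(x, α)` and `(y, β)`, and this
expression differs from `x ▷_α (y ▷_β z)` by `x ≻_α (z ≺_β y) + (y ≻_β z) ≺_α x`, which is
symmetric by the first axiom.
-/

section Definitions

variable {k Ω A : Type*} [CommSemiring k] [AddCommGroup A] [Module k A]

/-- The product `x ∗_{α,β} y = x ≻_α y + x ≺_β y` associated with two families of operations
`≺_ω` and `≻_ω`. -/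
def associatedProduct (prec succ : Ω → A →ₗ[k] A →ₗ[k] A) (α β : Ω) : A →ₗ[k] A →ₗ[k] A :=
  succ α + prec β

/-- The product `x ▷_ω y = x ≻_ω y - y ≺_ω x` obtained from two families of operations
`≺_ω` and `≻_ω`. -/
def leftPreLieProduct (prec succ : Ω → A →ₗ[k] A →ₗ[k] A) (ω : Ω) : A →ₗ[k] A →ₗ[k] A :=
  succ ω - (prec ω).flip

/-- The families `prec ω = ≺_ω` and `succ ω = ≻_ω` form a pre-anti-flexible family algebra
structure on `A`. The index set carries an arbitrary multiplication, so the order of the factors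
in `α * β` and `β * α` is that of the defining identities. -/
structure IsPreAntiFlexibleFamily [Mul Ω] (prec succ : Ω → A →ₗ[k] A →ₗ[k] A) : Prop where
  succ_prec : ∀ (α β : Ω) (x y z : A),
    prec β (succ α x y) z - succ α x (prec β y z) =
      prec α (succ β z y) x - succ β z (prec α y x)
  succ_succ : ∀ (α β : Ω) (x y z : A),
    succ (α * β) (associatedProduct prec succ α β x y) z - succ α x (succ β y z) =
      prec α (prec β z y) x - prec (β * α) z (associatedProduct prec succ β α y x)

/-- The family `tri ω = ▷_ω` makes `A` a left pre-Lie family algebra: the associator of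
`x, y, z` with indices `α, β` is invariant under exchanging `(x, α)` and `(y, β)`. -/
def IsLeftPreLieFamily [Mul Ω] (tri : Ω → A →ₗ[k] A →ₗ[k] A) : Prop :=
  ∀ (α β : Ω) (x y z : A),
    tri (α * β) (tri α x y) z - tri α x (tri β y z) =
      tri (β * α) (tri β y x) z - tri β y (tri α x z)

end Definitions

section Products

variable {k Ω A : Type*} [CommSemiring k] [AddCommGroup A] [Module k A]
  (prec succ : Ω → A →ₗ[k] A →ₗ[k] A)

theorem associatedProduct_apply (α β : Ω) (x y : A) :
    associatedProduct prec succ α β x y = succ α x y + prec β x y :=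
  rfl

theorem leftPreLieProduct_apply (ω : Ω) (x y : A) :
    leftPreLieProduct prec succ ω x y = succ ω x y - prec ω y x :=
  rfl

theorem leftPreLieProduct_sub_swap (α β : Ω) (x y : A) :
    leftPreLieProduct prec succ α x y - leftPreLieProduct prec succ β y x =
      associatedProduct prec succ α β x y - associatedProduct prec succ β α y x := by
  simp only [leftPreLieProduct_apply, associatedProduct_apply]
  abel

theorem leftPreLieProduct_leftPreLieProduct (α β : Ω) (x y z : A) :
    leftPreLieProduct prec succ α x (leftPreLieProduct prec succ β y z) =
      (succ α x (succ β y z) + prec α (prec β z y) x) -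
        (succ α x (prec β z y) + prec α (succ β y z) x) := by
  simp only [leftPreLieProduct_apply, map_sub]
  abel

end Products

theorem isLeftPreLieFamily_iff_commutator {k Ω A : Type*} [CommSemiring k] [CommMagma Ω]
    [AddCommGroup A] [Module k A] {tri : Ω → A →ₗ[k] A →ₗ[k] A} :
    IsLeftPreLieFamily tri ↔ ∀ (α β : Ω) (x y z : A),
      tri (α * β) (tri α x y - tri β y x) z =
        tri α x (tri β y z) - tri β y (tri α x z) := by
  refine forall₅_congr fun α β x y z ↦ ?_
  rw [mul_comm β α, map_sub, LinearMap.sub_apply, sub_eq_sub_iff_sub_eq_sub]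

namespace IsPreAntiFlexibleFamily

variable {k Ω A : Type*} [CommSemiring k] [AddCommGroup A] [Module k A]
  {prec succ : Ω → A →ₗ[k] A →ₗ[k] A}

theorem succ_prec_add_prec_succ_swap [Mul Ω] (h : IsPreAntiFlexibleFamily prec succ)
    (α β : Ω) (x y z : A) :
    succ α x (prec β z y) + prec α (succ β y z) x =
      succ β y (prec α z x) + prec β (succ α x z) y := by
  rw [add_comm, add_comm (succ β y _)]
  exact (sub_eq_sub_iff_add_eq_add.mp (h.succ_prec α β x z y)).symm

theorem succ_associatedProduct_add_prec_associatedProduct [CommMagma Ω]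
    (h : IsPreAntiFlexibleFamily prec succ) (α β : Ω) (x y z : A) :
    succ (α * β) (associatedProduct prec succ α β x y) z +
        prec (α * β) z (associatedProduct prec succ β α y x) =
      succ α x (succ β y z) + prec α (prec β z y) x := by
  have key := sub_eq_sub_iff_add_eq_add.mp (h.succ_succ α β x y z)
  rwa [mul_comm β α, add_comm (prec α _ x)] at key

theorem leftPreLieProduct_commutator [CommMagma Ω] (h : IsPreAntiFlexibleFamily prec succ)
    (α β : Ω) (x y z : A) :
    leftPreLieProduct prec succ (α * β)
        (associatedProduct prec succ α β x y - associatedProduct prec succ β α y x) z =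
      (succ α x (succ β y z) + prec α (prec β z y) x) -
        (succ β y (succ α x z) + prec β (prec α z x) y) := by
  rw [← h.succ_associatedProduct_add_prec_associatedProduct α β x y z,
    ← h.succ_associatedProduct_add_prec_associatedProduct β α y x z, mul_comm β α]
  simp only [leftPreLieProduct_apply, map_sub, LinearMap.sub_apply]
  abel

end IsPreAntiFlexibleFamily

theorem preAntiFlexibleFamily_to_leftPreLieFamily_general
    {k Ω A : Type*} [CommSemiring k] [CommMagma Ω] [AddCommGroup A] [Module k A]
    {prec succ : Ω → A →ₗ[k] A →ₗ[k] A} (h : IsPreAntiFlexibleFamily prec succ) :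
    IsLeftPreLieFamily (leftPreLieProduct prec succ) := by
  refine isLeftPreLieFamily_iff_commutator.mpr fun α β x y z ↦ ?_
  rw [leftPreLieProduct_sub_swap, h.leftPreLieProduct_commutator,
    leftPreLieProduct_leftPreLieProduct, leftPreLieProduct_leftPreLieProduct,
    h.succ_prec_add_prec_succ_swap α β x y z, sub_sub_sub_cancel_right]

/-- `x ▷_ω y := x ≻_ω y − y ≺_ω x` turns a pre-anti-flexible family
algebra into a left pre-Lie family algebra. -/
theorem preAntiFlexibleFamily_to_leftPreLieFamily
    (k : Type*) [Field k] (Ω : Type*) [CommSemigroup Ω]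
    (A : Type*) [AddCommGroup A] [Module k A]
    (prec succ : Ω → A →ₗ[k] A →ₗ[k] A)
    (h1 : ∀ (α β : Ω) (x y z : A),
      prec β (succ α x y) z - succ α x (prec β y z) =
        prec α (succ β z y) x - succ β z (prec α y x))
    (h2 : ∀ (α β : Ω) (x y z : A),
      succ (α * β) (succ α x y + prec β x y) z - succ α x (succ β y z) =
        prec α (prec β z y) x - prec (β * α) z (succ β y x + prec α y x))
    (tri : Ω → A → A → A)
    (htri : ∀ (ω : Ω) (x y : A), tri ω x y = succ ω x y - prec ω y x) :
    ∀ (α β : Ω) (x y z : A),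
      tri (α * β) (tri α x y) z - tri α x (tri β y z) =
        tri (β * α) (tri β y x) z - tri β y (tri α x z) := by
  simp only [htri]
  exact preAntiFlexibleFamily_to_leftPreLieFamily_general ⟨h1, h2⟩
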